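/- Let A := N/d + c·L and for z > 0 define r(z) := (N + A)·log₂ z + log₂((A+1)·e^{A+1}) + N·log₂ d. Let 0 < ε < 1, and let PWS = (S, (p_I)_{I∈S}) be a piecewise stationary model for sequences of length n such that p_I(x) ≤ 1 − ε for every I ∈ S and every symbol x. For any realization of Algorithm RFD in which c = γ/L for an integer γ ≥ 0, setting δ := r(L+1) / (ε·(L−γ)·log₂ e), it holds that ℓ(x^n; RFD) − (1+δ)·ℓ(x^n; PWS) ≤ |S|·[ (L−γ)·log₂(e·(L+1)) + log₂(L−γ) + r(L+1) ] + r(L+1). -/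

import Mathlib

open Finset

/-- One call to `Update`: if the total would exceed `T`, rescale first
(replace each count `s i` by `max 1 ⌊cf * s i⌋`), then add `d` to the count of `x`. -/
noncomputable def RFDupdate {N : ℕ} (cf : ℝ) (d T : ℕ) (s : Fin N → ℕ) (x : Fin N) : Fin N → ℕ :=
  let s' : Fin N → ℕ :=
    if T < (∑ i, s i) + d then (fun i => max 1 ⌊cf * (s i : ℝ)⌋₊) else s
  fun i => if i = x then s' i + d else s' i

/-- State (counts) of Algorithm RFD after `k` update steps on the input sequence `xs`
(0-indexed: the `k`-th step processes symbol `xs (k-1)`). -/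
noncomputable def RFDcounts {N : ℕ} (cf : ℝ) (d T : ℕ) (s0 : Fin N → ℕ) (xs : ℕ → Fin N) : ℕ → Fin N → ℕ
  | 0 => s0
  | k + 1 => RFDupdate cf d T (RFDcounts cf d T s0 xs k) (xs k)

/-- Total counter `t` after `k` update steps. -/
noncomputable def RFDtotal {N : ℕ} (cf : ℝ) (d T : ℕ) (s0 : Fin N → ℕ) (xs : ℕ → Fin N) (k : ℕ) : ℕ :=
  ∑ i, RFDcounts cf d T s0 xs k i

/-- A rescale takes place in step `k ≥ 1` iff at the beginning of step `k`
the total plus `d` exceeds `T`. -/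
def RFDrescaleAt {N : ℕ} (cf : ℝ) (d T : ℕ) (s0 : Fin N → ℕ) (xs : ℕ → Fin N) (k : ℕ) : Prop :=
  1 ≤ k ∧ T < RFDtotal cf d T s0 xs (k - 1) + d

/-- `P` is a partition of the integer interval `[a,b]` into consecutive closed intervals,
listed in order; an interval `[i,j]` is represented by the pair `(i,j)`. -/
def ConsecPartition (a b : ℕ) (P : List (ℕ × ℕ)) : Prop :=
  P ≠ [] ∧ P.head?.map Prod.fst = some a ∧ P.getLast?.map Prod.snd = some b ∧
    (∀ p ∈ P, p.1 ≤ p.2) ∧ P.Chain' (fun p q => q.1 = p.2 + 1)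

/-- `P` is the rescale partition of `[a,b]`: a partition into consecutive intervals `[i,j]`
such that no rescale occurs at steps `i,…,j-1`, and a rescale occurs at step `j` whenever
`j < b` (for the last interval, a rescale at its last step is optional). -/
def RFDrescalePartition {N : ℕ} (cf : ℝ) (d T : ℕ) (s0 : Fin N → ℕ) (xs : ℕ → Fin N)
    (a b : ℕ) (P : List (ℕ × ℕ)) : Prop :=
  ConsecPartition a b P ∧
    (∀ p ∈ P, ∀ k, p.1 ≤ k → k < p.2 → ¬ RFDrescaleAt cf d T s0 xs k) ∧
    (∀ p ∈ P, p.2 < b → RFDrescaleAt cf d T s0 xs p.2)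

/-- The probability `RFD(x; x^k)` that Algorithm RFD assigns to symbol `x` after `k` steps. -/
noncomputable def RFDprob {N : ℕ} (cf : ℝ) (d T : ℕ) (s0 : Fin N → ℕ) (xs : ℕ → Fin N)
    (k : ℕ) (x : Fin N) : ℝ :=
  (RFDcounts cf d T s0 xs k x : ℝ) / (RFDtotal cf d T s0 xs k : ℝ)

/-- Ideal code length (in bits) of Algorithm RFD on steps `a,…,b` (1-indexed steps;
step `k` encodes symbol `xs (k-1)` using the prediction after `k-1` steps). -/
noncomputable def RFDcodeLen {N : ℕ} (cf : ℝ) (d T : ℕ) (s0 : Fin N → ℕ) (xs : ℕ → Fin N)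
    (a b : ℕ) : ℝ :=
  -∑ k ∈ Finset.Icc a b, Real.logb 2 (RFDprob cf d T s0 xs (k - 1) (xs (k - 1)))

/-- Ideal code length (in bits) of a fixed distribution `p` on steps `a,…,b`. -/
noncomputable def distCodeLen {N : ℕ} (p : Fin N → ℝ) (xs : ℕ → Fin N) (a b : ℕ) : ℝ :=
  -∑ k ∈ Finset.Icc a b, Real.logb 2 (p (xs (k - 1)))

/-- The redundancy function `r(z) = (N + A)·log₂ z + log₂((A+1)·e^(A+1)) + N·log₂ d`. -/
noncomputable def rBound (N d : ℕ) (A z : ℝ) : ℝ :=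
  ((N : ℝ) + A) * Real.logb 2 z + Real.logb 2 ((A + 1) * Real.exp (A + 1))
    + (N : ℝ) * Real.logb 2 d

/-- Ideal code length of a piecewise stationary model with partition `S` (a list of
consecutive intervals of `[1,n]`) and per-segment distributions `pI`: on each segment
`I = [a,b] ∈ S`, symbol `x_k` (`a ≤ k ≤ b`) is coded with `-log₂ p_I(x_k)` bits. -/
noncomputable def pwsCodeLen {N : ℕ} (S : List (ℕ × ℕ)) (pI : ℕ × ℕ → Fin N → ℝ)
    (xs : ℕ → Fin N) : ℝ :=
  (S.map (fun q => -∑ k ∈ Finset.Icc q.1 q.2, Real.logb 2 (pI q (xs (k - 1))))).sum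

/-!
Between two rescales Algorithm RFD is additive smoothing with initial weights `s / d`. The product
of its predictions along such a run is compared with the product of any fixed distribution `p`
through the multinomial coefficient of the symbol frequencies, which is at most `1 / ∏ p ^ c`; what
is lost is a factor for each occurring symbol whose initial weight is below `1`, and the growth of
the normalizing totals.

The first run of each stationary segment starts from arbitrary counts and pays the bracket of the
theorem once. Every other run starts at a rescale, where the total is small, and a run of `m` steps
then pays at most `R * m / (m + 1)`, with `R = r(L + 1)`. This amount is charged to the steps of the
run through a charge that depends only on the time since the last rescale, so that it can be summed
over all segments at once. Consecutive rescales are more than `L - γ - 1` steps apart, hence all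
charges up to time `n` sum to at most `R / (L - γ) * n + R`. Finally, `p_I ≤ 1 - ε` makes the
piecewise stationary model spend at least `ε log₂ e` bits per step, which turns the linear term into
`δ` times its code length.
-/

section AdditiveSmoothing

theorem sum_range_count {α M : Type*} [Fintype α] [DecidableEq α] [AddCommMonoid M]
    (y : ℕ → α) (f : α → ℕ → M) (m : ℕ) :
    ∑ k ∈ range m, f (y k) (Nat.count (y · = y k) k) =
      ∑ x, ∑ j ∈ range (Nat.count (y · = x) m), f x j := by
  induction m with
  | zero => simp
  | succ m ih =>
    have last_step : ∀ x, ∑ j ∈ range (Nat.count (y · = x) (m + 1)), f x j =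
        ∑ j ∈ range (Nat.count (y · = x) m), f x j +
          if y m = x then f x (Nat.count (y · = x) m) else 0 := by
      intro x
      rw [Nat.count_succ]
      split_ifs <;> simp [sum_range_succ]
    simp only [last_step, sum_add_distrib, sum_range_succ, ih, sum_ite_eq, mem_univ, if_true]

theorem sum_count_eq {α : Type*} [Fintype α] [DecidableEq α] (y : ℕ → α) (m : ℕ) :
    ∑ x, Nat.count (y · = x) m = m := by
  simpa using (sum_range_count y (fun _ _ => (1 : ℕ)) m).symm

theorem multinomial_mul_prod_pow_le_one {α : Type*} [Fintype α] {p : α → ℝ}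
    (hp : ∀ x, 0 ≤ p x) (hp1 : ∑ x, p x ≤ 1) (c : α → ℕ) :
    (Nat.multinomial univ c : ℝ) * ∏ x, p x ^ c x ≤ 1 := by
  classical
  calc (Nat.multinomial univ c : ℝ) * ∏ x, p x ^ c x
      ≤ ∑ k ∈ univ.piAntidiag (∑ x, c x), (Nat.multinomial univ k : ℝ) * ∏ x, p x ^ k x :=
        single_le_sum (f := fun k : α → ℕ => (Nat.multinomial univ k : ℝ) * ∏ x, p x ^ k x)
          (fun k _ => mul_nonneg (Nat.cast_nonneg _) (prod_nonneg fun x _ => pow_nonneg (hp x) _))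
          (by simp [mem_piAntidiag])
    _ = (∑ x, p x) ^ ∑ x, c x := (sum_pow_eq_sum_piAntidiag univ p _).symm
    _ ≤ 1 := pow_le_one₀ (sum_nonneg fun x _ => hp x) hp1

theorem sum_log_add_log_factorial_le {α : Type*} [Fintype α] [DecidableEq α] {p : α → ℝ}
    (hp : ∀ x, 0 ≤ p x) (hp1 : ∑ x, p x ≤ 1) (y : ℕ → α) {m : ℕ}
    (hpos : ∀ k < m, 0 < p (y k)) :
    ∑ k ∈ range m, Real.log (p (y k)) + Real.log m.factorial ≤
      ∑ x, Real.log (Nat.count (y · = x) m).factorial := by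
  set c : α → ℕ := fun x => Nat.count (y · = x) m
  have used_pos : ∀ x, 0 < p x ^ c x := by
    intro x
    rcases eq_or_ne (c x) 0 with h0 | h0
    · simp [h0]
    · obtain ⟨k, hk, rfl⟩ := Nat.count_ne_iff_exists.1 h0
      exact pow_pos (hpos k hk) _
  have log_likelihood :
      ∑ k ∈ range m, Real.log (p (y k)) = Real.log (∏ x, p x ^ c x) := by
    rw [Real.log_prod fun x _ => (used_pos x).ne']
    simpa [c] using sum_range_count y (fun x _ => Real.log (p x)) m
  have factorial_eq : (∏ x, ((c x).factorial : ℝ)) * Nat.multinomial univ c = m.factorial := by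
    have := Nat.multinomial_spec univ c
    rw [sum_count_eq] at this
    exact_mod_cast this
  have hprod : 0 < ∏ x, p x ^ c x := prod_pos fun x _ => used_pos x
  rw [log_likelihood, ← Real.log_mul hprod.ne' (by positivity),
    ← Real.log_prod fun x _ => by positivity]
  refine Real.log_le_log (by positivity) ?_
  calc (∏ x, p x ^ c x) * m.factorial
      = (∏ x, ((c x).factorial : ℝ)) * (Nat.multinomial univ c * ∏ x, p x ^ c x) := by
        rw [← factorial_eq]; ring
    _ ≤ ∏ x, ((c x).factorial : ℝ) :=
        mul_le_of_le_one_right (by positivity) (multinomial_mul_prod_pow_le_one hp hp1 c)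

theorem log_factorial_eq_sum (n : ℕ) :
    Real.log n.factorial = ∑ j ∈ range n, Real.log ((j : ℝ) + 1) := by
  rw [← prod_range_add_one_eq_factorial, Nat.cast_prod, Real.log_prod fun j _ => by positivity]
  simp

theorem log_factorial_le_sum_log_add {σ : ℝ} (hσ : 1 ≤ σ) (n : ℕ) :
    Real.log n.factorial ≤ ∑ j ∈ range n, Real.log (σ + j) := by
  rw [log_factorial_eq_sum]
  exact sum_le_sum fun j _ => Real.log_le_log (by positivity) (by linarith)

theorem log_factorial_succ_le_sum_log_add {σ : ℝ} (hσ : 0 < σ) (n : ℕ) :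
    Real.log (n + 1).factorial ≤
      Real.log ((n : ℝ) + 1) - Real.log σ + ∑ j ∈ range (n + 1), Real.log (σ + j) := by
  have shifted : Real.log n.factorial ≤ ∑ j ∈ range n, Real.log (σ + 1 + j) :=
    log_factorial_le_sum_log_add (by linarith) n
  have hsplit : ∑ j ∈ range (n + 1), Real.log (σ + j) =
      ∑ j ∈ range n, Real.log (σ + 1 + j) + Real.log σ := by
    rw [sum_range_succ']
    congr 1
    · exact sum_congr rfl fun j _ => by push_cast; ring_nf
    · simp
  rw [hsplit, Nat.factorial_succ, Nat.cast_mul, Real.log_mul (by positivity) (by positivity)]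
  push_cast
  linarith

/-- The symbols with initial weight below `1` that occur among `y 0, …, y (m - 1)`. Only for
these does additive smoothing lose against the factorials of the symbol frequencies. -/
noncomputable def underweighted {α : Type*} [DecidableEq α] (σ : α → ℝ) (y : ℕ → α) (m : ℕ) :
    Finset α :=
  {x ∈ (range m).image y | σ x < 1}

theorem mem_underweighted {α : Type*} [DecidableEq α] {σ : α → ℝ} {y : ℕ → α} {m : ℕ} {x : α} :
    x ∈ underweighted σ y m ↔ Nat.count (y · = x) m ≠ 0 ∧ σ x < 1 := by
  simp [underweighted, Nat.count_ne_iff_exists]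

theorem card_underweighted_le {α : Type*} [DecidableEq α] (σ : α → ℝ) (y : ℕ → α) (m : ℕ) :
    #(underweighted σ y m) ≤ m :=
  (card_filter_le _ _).trans (card_image_le.trans (card_range m).le)

theorem card_underweighted_lt {α : Type*} [Fintype α] [DecidableEq α] {σ : α → ℝ} {x : α}
    (hx : 1 ≤ σ x) (y : ℕ → α) (m : ℕ) : #(underweighted σ y m) < Fintype.card α :=
  card_lt_univ_of_notMem (x := x) (by simp [underweighted, hx])

theorem card_underweighted_mul_le {α : Type*} [Fintype α] [DecidableEq α] {σ : α → ℝ} {x : α}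
    (hx : 1 ≤ σ x) (y : ℕ → α) (m : ℕ) :
    #(underweighted σ y m) * (m + 1) ≤ m * Fintype.card α :=
  calc #(underweighted σ y m) * (m + 1)
      ≤ m * (#(underweighted σ y m) + 1) := by
        linarith [card_underweighted_le σ y m]
    _ ≤ m * Fintype.card α := Nat.mul_le_mul_left m (card_underweighted_lt hx y m)

theorem sum_log_factorial_count_le {α : Type*} [Fintype α] [DecidableEq α] {a : ℝ} (ha : 0 < a)
    {σ : α → ℝ} (hσ : ∀ x, a ≤ σ x) (y : ℕ → α) (m : ℕ) :
    ∑ x, Real.log (Nat.count (y · = x) m).factorial ≤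
      #(underweighted σ y m) * (Real.log m - Real.log a) +
        ∑ k ∈ range m, Real.log (σ (y k) + Nat.count (y · = y k) k) := by
  have per_symbol : ∀ x, Real.log (Nat.count (y · = x) m).factorial ≤
      (if x ∈ underweighted σ y m then Real.log m - Real.log a else 0) +
        ∑ j ∈ range (Nat.count (y · = x) m), Real.log (σ x + j) := by
    intro x
    split_ifs with hx
    · obtain ⟨n, hn⟩ := Nat.exists_eq_add_one_of_ne_zero (mem_underweighted.1 hx).1
      have hnm : ((n : ℝ) + 1) ≤ m := by
        exact_mod_cast hn ▸ Nat.count_le (p := (y · = x)) (n := m)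
      have := Real.log_le_log (by positivity) hnm
      have := Real.log_le_log ha (hσ x)
      have := log_factorial_succ_le_sum_log_add (ha.trans_le (hσ x)) n
      rw [hn]
      linarith
    · rw [zero_add]
      rcases eq_or_ne (Nat.count (y · = x) m) 0 with h0 | h0
      · simp [h0]
      · refine log_factorial_le_sum_log_add (le_of_not_gt fun hlt => hx ?_) _
        exact mem_underweighted.2 ⟨h0, hlt⟩
  refine (sum_le_sum fun x _ => per_symbol x).trans_eq ?_
  rw [sum_add_distrib, sum_range_count y fun x j => Real.log (σ x + j), sum_ite_mem, univ_inter,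
    sum_const, nsmul_eq_mul]

theorem sum_log_div_add_one_le {τ v : ℝ} (hτ : 0 < τ) (hv : 0 ≤ v) (hτv : τ ≤ v + 1) {m : ℕ}
    (hm : 1 ≤ m) :
    ∑ k ∈ range m, (Real.log (τ + k) - Real.log ((k : ℝ) + 1)) ≤
      Real.log (v + 1) + v * Real.log m := by
  induction m, hm using Nat.le_induction with
  | base => simpa using Real.log_le_log hτ hτv
  | succ m hm ih =>
    have : (0 : ℝ) < m := by exact_mod_cast hm
    have growth : Real.log (τ + m) - Real.log ((m : ℝ) + 1) ≤ v * (1 / ((m : ℝ) + 1)) := by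
      rw [← Real.log_div (by positivity) (by positivity)]
      refine (Real.log_le_sub_one_of_pos (by positivity)).trans ?_
      rw [div_sub_one (by positivity), mul_one_div]
      gcongr
      linarith
    have log_step : 1 / ((m : ℝ) + 1) ≤ Real.log ((m : ℝ) + 1) - Real.log m := by
      rw [← Real.log_div (by positivity) (by positivity)]
      refine le_trans (le_of_eq ?_) (Real.one_sub_inv_le_log_of_pos (by positivity))
      field_simp
      ring
    rw [sum_range_succ]
    push_cast
    linarith [mul_le_mul_of_nonneg_left log_step hv]

theorem additive_smoothing_redundancy_le {α : Type*} [Fintype α] [DecidableEq α] {p : α → ℝ}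
    (hp : ∀ x, 0 ≤ p x) (hp1 : ∑ x, p x ≤ 1) {y : ℕ → α} {m : ℕ} (hm : 1 ≤ m)
    (hpos : ∀ k < m, 0 < p (y k)) {a : ℝ} (ha : 0 < a) {σ : α → ℝ} (hσ : ∀ x, a ≤ σ x)
    {τ v : ℝ} (hτ : 0 < τ) (hv : 0 ≤ v) (hτv : τ ≤ v + 1) :
    ∑ k ∈ range m, (Real.log (p (y k)) -
        Real.log ((σ (y k) + Nat.count (y · = y k) k) / (τ + k))) ≤
      #(underweighted σ y m) * (Real.log m - Real.log a) +
        (Real.log (v + 1) + v * Real.log m) := by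
  have weight_pos : ∀ k, 0 < σ (y k) + Nat.count (y · = y k) k := fun k =>
    add_pos_of_pos_of_nonneg (ha.trans_le (hσ _)) (Nat.cast_nonneg _)
  have log_ratio : ∀ k, Real.log ((σ (y k) + Nat.count (y · = y k) k) / (τ + k)) =
      Real.log (σ (y k) + Nat.count (y · = y k) k) - Real.log (τ + k) := fun k =>
    Real.log_div (weight_pos k).ne' (by positivity)
  have likelihood := sum_log_add_log_factorial_le hp hp1 y hpos
  have factorials := sum_log_factorial_count_le ha hσ y m
  have normalizers := sum_log_div_add_one_le hτ hv hτv hm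
  rw [log_factorial_eq_sum] at likelihood
  simp only [log_ratio, sum_sub_distrib] at normalizers ⊢
  linarith

end AdditiveSmoothing

section Renewal

/-- `P` fails strictly between `u` and `v`. For `P` the rescale times of Algorithm RFD, the
predictions after `u, …, v - 1` steps then come from one uninterrupted growth of the counts. -/
def IsRun (P : ℕ → Prop) (u v : ℕ) : Prop :=
  ∀ i, u < i → i < v → ¬ P i

theorem forall_not_or_exists_isRun (P : ℕ → Prop) (b : ℕ) :
    (∀ i < b, ¬ P i) ∨ ∃ g < b, P g ∧ IsRun P g b := by
  induction b with
  | zero => exact Or.inl fun i hi => absurd hi i.not_lt_zero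
  | succ b ih =>
    by_cases hb : P b
    · exact Or.inr ⟨b, b.lt_succ_self, hb, fun i h1 h2 => by omega⟩
    · rcases ih with hnone | ⟨g, hgb, hg, hrun⟩
      · refine Or.inl fun i hi => ?_
        rcases Nat.lt_succ_iff_lt_or_eq.1 hi with hi | rfl
        exacts [hnone i hi, hb]
      · refine Or.inr ⟨g, hgb.trans b.lt_succ_self, hg, fun i h1 hi => ?_⟩
        rcases Nat.lt_succ_iff_lt_or_eq.1 hi with hi | rfl
        exacts [hrun i h1 hi, hb]

theorem isRun_or_exists_isRun (P : ℕ → Prop) (a b : ℕ) :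
    IsRun P a b ∨ ∃ g, a < g ∧ g < b ∧ P g ∧ IsRun P g b := by
  rcases forall_not_or_exists_isRun P b with hnone | ⟨g, hgb, hg, hrun⟩
  · exact Or.inl fun i _ hi => hnone i hi
  · rcases lt_or_ge a g with hag | hga
    · exact Or.inr ⟨g, hag, hgb, hg, hrun⟩
    · exact Or.inl fun i hi => hrun i (hga.trans_lt hi)

/-- Charge of the 0-indexed step `k`: with `g ≤ k` the last time satisfying `P` and
`i = k - g + 1`, it is `R / (i (i + 1))`, and it is `0` if there is no such `g`. These charges
telescope: the first `m` steps after `g` are charged `R * m / (m + 1)`. -/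
noncomputable def renewalCharge (P : ℕ → Prop) [DecidablePred P] (R : ℝ) (k : ℕ) : ℝ :=
  let g := Nat.findGreatest P k
  if P g then R / (((k : ℝ) - g + 1) * ((k : ℝ) - g + 2)) else 0

variable {P : ℕ → Prop} [DecidablePred P] {R β K : ℝ}

theorem renewalCharge_nonneg (hR : 0 ≤ R) (k : ℕ) : 0 ≤ renewalCharge P R k := by
  have : (0 : ℝ) ≤ (k : ℝ) - Nat.findGreatest P k :=
    sub_nonneg.2 (Nat.cast_le.2 (Nat.findGreatest_le k))
  unfold renewalCharge
  positivity

theorem renewalCharge_of_forall_not {k : ℕ} (h : ∀ i ≤ k, ¬ P i) : renewalCharge P R k = 0 :=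
  if_neg (h _ (Nat.findGreatest_le k))

theorem renewalCharge_of_isRun {g i : ℕ} (hg : P g) (h : IsRun P g (g + i + 1)) :
    renewalCharge P R (g + i) = R / (((i : ℝ) + 1) * (i + 2)) := by
  have last_eq : Nat.findGreatest P (g + i) = g :=
    Nat.findGreatest_eq_iff.2 ⟨by omega, fun _ => hg, fun _ h1 h2 => h _ h1 (by omega)⟩
  simp only [renewalCharge, last_eq, if_pos hg]
  push_cast
  ring

theorem sum_renewalCharge_of_isRun {g : ℕ} (hg : P g) (m : ℕ) (h : IsRun P g (g + m)) :
    ∑ k ∈ Ico g (g + m), renewalCharge P R k = R * (m / (m + 1)) := by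
  induction m with
  | zero => simp
  | succ m ih =>
    rw [← add_assoc, sum_Ico_succ_top (by omega), ih fun i h1 h2 => h i h1 (by omega),
      renewalCharge_of_isRun hg h]
    push_cast
    field_simp
    ring

theorem sum_renewalCharge_le_of_prop (hβ : 0 ≤ β)
    (hgap : ∀ g m, 0 < m → P g → P (g + m) → IsRun P g (g + m) → R * (m / (m + 1)) ≤ β * m)
    {n : ℕ} (hn : P n) : ∑ k ∈ Ico 0 n, renewalCharge P R k ≤ β * n := by
  induction n using Nat.strong_induction_on with
  | _ n ih =>
    rcases forall_not_or_exists_isRun P n with hnone | ⟨g, hgn, hg, hrun⟩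
    · rw [sum_eq_zero fun k hk => renewalCharge_of_forall_not fun i hi =>
        hnone i (hi.trans_lt (mem_Ico.1 hk).2)]
      positivity
    · obtain ⟨m, rfl⟩ := Nat.exists_eq_add_of_le hgn.le
      have := ih g hgn hg
      have := hgap g m (by omega) hg hn hrun
      rw [← sum_Ico_consecutive _ g.zero_le hgn.le, sum_renewalCharge_of_isRun hg m hrun]
      push_cast
      linarith

theorem sum_renewalCharge_le (hβ : 0 ≤ β) (hR : 0 ≤ R)
    (hgap : ∀ g m, 0 < m → P g → P (g + m) → IsRun P g (g + m) → R * (m / (m + 1)) ≤ β * m)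
    (n : ℕ) : ∑ k ∈ Ico 0 n, renewalCharge P R k ≤ β * n + R := by
  rcases forall_not_or_exists_isRun P n with hnone | ⟨g, hgn, hg, hrun⟩
  · rw [sum_eq_zero fun k hk => renewalCharge_of_forall_not fun i hi =>
      hnone i (hi.trans_lt (mem_Ico.1 hk).2)]
    positivity
  · obtain ⟨m, rfl⟩ := Nat.exists_eq_add_of_le hgn.le
    have before_last := sum_renewalCharge_le_of_prop hβ hgap hg
    have unfinished_le : R * ((m : ℝ) / (m + 1)) ≤ R :=
      mul_le_of_le_one_right hR (div_le_one_of_le₀ (by linarith) (by positivity))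
    rw [← sum_Ico_consecutive _ g.zero_le hgn.le, sum_renewalCharge_of_isRun hg m hrun]
    push_cast
    linarith [mul_nonneg hβ m.cast_nonneg]

theorem sum_Ico_le_add_sum_renewalCharge (hR : 0 ≤ R) (F : ℕ → ℝ) {a b : ℕ} (hab : a < b)
    (hfirst : ∀ v, a < v → v ≤ b → IsRun P a v → ∑ k ∈ Ico a v, F k ≤ K)
    (hfresh : ∀ g m, a < g → 0 < m → g + m ≤ b → P g → IsRun P g (g + m) →
      ∑ k ∈ Ico g (g + m), F k ≤ R * (m / (m + 1))) :
    ∑ k ∈ Ico a b, F k ≤ K + ∑ k ∈ Ico a b, renewalCharge P R k := by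
  induction b using Nat.strong_induction_on with
  | _ b ih =>
    rcases isRun_or_exists_isRun P a b with hrun | ⟨g, hag, hgb, hg, hrun⟩
    · exact (hfirst b hab le_rfl hrun).trans
        (le_add_of_nonneg_right (sum_nonneg fun k _ => renewalCharge_nonneg hR k))
    · obtain ⟨m, rfl⟩ := Nat.exists_eq_add_of_le hgb.le
      have before_last := ih g hgb hag (fun v h1 h2 => hfirst v h1 (h2.trans hgb.le))
        (fun g' m' h1 h2 h3 => hfresh g' m' h1 h2 (h3.trans hgb.le))
      have after_last := hfresh g m hag (by omega) le_rfl hg hrun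
      rw [← sum_renewalCharge_of_isRun hg m hrun] at after_last
      rw [← sum_Ico_consecutive _ hag.le hgb.le, ← sum_Ico_consecutive _ hag.le hgb.le]
      linarith

end Renewal

namespace ConsecPartition

variable {a b : ℕ} {q : ℕ × ℕ} {S : List (ℕ × ℕ)}

theorem cons (h : ConsecPartition a b (q :: S)) :
    q.1 = a ∧ q.1 ≤ q.2 ∧ (S = [] ∧ q.2 = b ∨ ConsecPartition (q.2 + 1) b S) := by
  obtain ⟨-, hhead, hlast, hle, hchain⟩ := h
  refine ⟨by simpa using hhead, hle q (by simp), ?_⟩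
  cases S with
  | nil => exact Or.inl (by simpa using hlast)
  | cons q' S =>
    have hchain := List.isChain_cons_cons.1 hchain
    exact Or.inr ⟨by simp, by simpa using hchain.1, by simpa using hlast,
      fun p hp => hle p (List.mem_cons_of_mem _ hp), hchain.2⟩

theorem le (h : ConsecPartition a b S) : a ≤ b := by
  induction S generalizing a with
  | nil => exact absurd rfl h.1
  | cons q S ih =>
    obtain ⟨rfl, hq, ⟨-, rfl⟩ | hS⟩ := h.cons
    · exact hq
    · have := ih hS
      omega

theorem le_fst_of_mem (h : ConsecPartition a b S) (hq : q ∈ S) : a ≤ q.1 := by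
  induction S generalizing a with
  | nil => exact absurd hq List.not_mem_nil
  | cons p S ih =>
    obtain ⟨rfl, hp, hS⟩ := h.cons
    rcases List.mem_cons.1 hq with rfl | hq
    · exact le_rfl
    · rcases hS with ⟨rfl, -⟩ | hS
      · exact absurd hq List.not_mem_nil
      · have := ih hS hq
        omega

theorem fst_le_snd_of_mem (h : ConsecPartition a b S) (hq : q ∈ S) : q.1 ≤ q.2 :=
  h.2.2.2.1 q hq

theorem sum_Icc_eq {M : Type*} [AddCommMonoid M] (f : ℕ → M) (h : ConsecPartition a b S) :
    ∑ k ∈ Icc a b, f k = (S.map fun q => ∑ k ∈ Icc q.1 q.2, f k).sum := by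
  induction S generalizing a with
  | nil => exact absurd rfl h.1
  | cons q S ih =>
    obtain ⟨rfl, hq, ⟨rfl, rfl⟩ | hS⟩ := h.cons
    · simp
    · have hqb := hS.le
      rw [List.map_cons, List.sum_cons, ← ih hS]
      simp only [← Ico_add_one_right_eq_Icc]
      exact (sum_Ico_consecutive f (by omega) (by omega)).symm

end ConsecPartition

theorem sum_Icc_sub_one {M : Type*} [AddCommMonoid M] (f : ℕ → M) {a : ℕ} (ha : 1 ≤ a) (b : ℕ) :
    ∑ k ∈ Icc a b, f (k - 1) = ∑ k ∈ Ico (a - 1) b, f k := by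
  obtain ⟨a, rfl⟩ := Nat.exists_eq_add_of_le' ha
  rw [← Ico_add_one_right_eq_Icc, ← sum_Ico_add' (fun k => f (k - 1)) a b 1]
  rfl

theorem sum_max_one_floor_mul_le {α : Type*} [Fintype α] {c : ℝ} (hc0 : 0 ≤ c) (hc1 : c ≤ 1)
    {s : α → ℕ} (hs : ∀ x, 1 ≤ s x) :
    ((∑ x, max 1 ⌊c * (s x : ℝ)⌋₊ : ℕ) : ℝ) ≤
      Fintype.card α + c * (((∑ x, s x : ℕ) : ℝ) - Fintype.card α) := by
  have per_symbol : ∀ x, ((max 1 ⌊c * (s x : ℝ)⌋₊ : ℕ) : ℝ) ≤ 1 + c * ((s x : ℝ) - 1) := by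
    intro x
    have hx : (1 : ℝ) ≤ s x := by exact_mod_cast hs x
    rw [Nat.cast_max, Nat.cast_one]
    refine max_le (le_add_of_nonneg_right (mul_nonneg hc0 (sub_nonneg.2 hx))) ?_
    exact (Nat.floor_le (by positivity)).trans (by linarith)
  push_cast at per_symbol ⊢
  refine (sum_le_sum fun x _ => per_symbol x).trans_eq ?_
  simp [sum_add_distrib, ← mul_sum, sum_sub_distrib]

section Dynamics

variable {N d T : ℕ} {cf : ℝ} {s0 : Fin N → ℕ} {xs : ℕ → Fin N}

theorem RFDrescaleAt_succ {k : ℕ} :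
    RFDrescaleAt cf d T s0 xs (k + 1) ↔ T < RFDtotal cf d T s0 xs k + d := by
  simp [RFDrescaleAt]

theorem RFDcounts_succ_of_not_rescale {k : ℕ} (h : ¬ RFDrescaleAt cf d T s0 xs (k + 1))
    (x : Fin N) :
    RFDcounts cf d T s0 xs (k + 1) x =
      RFDcounts cf d T s0 xs k x + if xs k = x then d else 0 := by
  have not_full : ¬ T < ∑ i, RFDcounts cf d T s0 xs k i + d := RFDrescaleAt_succ.not.1 h
  simp only [RFDcounts, RFDupdate, if_neg not_full, eq_comm (a := x)]
  split_ifs <;> simp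

theorem RFDcounts_succ_of_rescale {k : ℕ} (h : RFDrescaleAt cf d T s0 xs (k + 1)) (x : Fin N) :
    RFDcounts cf d T s0 xs (k + 1) x =
      max 1 ⌊cf * (RFDcounts cf d T s0 xs k x : ℝ)⌋₊ + if xs k = x then d else 0 := by
  have full : T < ∑ i, RFDcounts cf d T s0 xs k i + d := RFDrescaleAt_succ.1 h
  simp only [RFDcounts, RFDupdate, if_pos full, eq_comm (a := x)]
  split_ifs <;> simp

theorem exists_le_RFDcounts_of_rescale {g : ℕ} (h : RFDrescaleAt cf d T s0 xs g) :
    ∃ x, d ≤ RFDcounts cf d T s0 xs g x := by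
  obtain ⟨k, rfl⟩ := Nat.exists_eq_add_of_le' h.1
  refine ⟨xs k, ?_⟩
  rw [RFDcounts_succ_of_rescale h, if_pos rfl]
  exact Nat.le_add_left _ _

theorem one_le_RFDcounts (hs0 : ∀ x, 1 ≤ s0 x) (k : ℕ) (x : Fin N) :
    1 ≤ RFDcounts cf d T s0 xs k x := by
  induction k with
  | zero => exact hs0 x
  | succ k ih =>
    by_cases h : RFDrescaleAt cf d T s0 xs (k + 1)
    · exact RFDcounts_succ_of_rescale h x ▸ (le_max_left _ _).trans (Nat.le_add_right _ _)
    · exact RFDcounts_succ_of_not_rescale h x ▸ ih.trans (Nat.le_add_right _ _)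

theorem card_le_RFDtotal (hs0 : ∀ x, 1 ≤ s0 x) (k : ℕ) : N ≤ RFDtotal cf d T s0 xs k := by
  simpa [RFDtotal] using
    card_nsmul_le_sum univ _ 1 fun x _ =>
      one_le_RFDcounts (cf := cf) (d := d) (T := T) (xs := xs) hs0 k x

theorem RFDtotal_pos (hs0 : ∀ x, 1 ≤ s0 x) (k : ℕ) : 0 < RFDtotal cf d T s0 xs k :=
  (xs 0).pos.trans_le (card_le_RFDtotal hs0 k)

theorem RFDtotal_succ_of_not_rescale {k : ℕ} (h : ¬ RFDrescaleAt cf d T s0 xs (k + 1)) :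
    RFDtotal cf d T s0 xs (k + 1) = RFDtotal cf d T s0 xs k + d := by
  simp [RFDtotal, RFDcounts_succ_of_not_rescale h, sum_add_distrib]

theorem RFDtotal_succ_of_rescale_le (hc0 : 0 ≤ cf) (hc1 : cf ≤ 1) (hs0 : ∀ x, 1 ≤ s0 x) {k : ℕ}
    (h : RFDrescaleAt cf d T s0 xs (k + 1)) :
    (RFDtotal cf d T s0 xs (k + 1) : ℝ) ≤
      N + cf * ((RFDtotal cf d T s0 xs k : ℝ) - N) + d := by
  have rescaled := sum_max_one_floor_mul_le hc0 hc1 (s := RFDcounts cf d T s0 xs k)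
    (one_le_RFDcounts hs0 k)
  simp only [RFDtotal, RFDcounts_succ_of_rescale h, sum_add_distrib, sum_ite_eq, mem_univ, if_true,
    Nat.cast_add]
  simpa using add_le_add_left rescaled (d : ℝ)

theorem RFDcounts_add_of_isRun {u m : ℕ} (h : IsRun (RFDrescaleAt cf d T s0 xs) u (u + m + 1))
    (x : Fin N) :
    RFDcounts cf d T s0 xs (u + m) x =
      RFDcounts cf d T s0 xs u x + d * Nat.count (fun j => xs (u + j) = x) m := by
  induction m with
  | zero => simp
  | succ m ih =>
    rw [← add_assoc, RFDcounts_succ_of_not_rescale (h (u + m + 1) (by omega) (by omega)),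
      ih fun i h1 h2 => h i h1 (by omega), Nat.count_succ]
    split_ifs <;> ring

theorem RFDtotal_add_of_isRun {u m : ℕ} (h : IsRun (RFDrescaleAt cf d T s0 xs) u (u + m + 1)) :
    RFDtotal cf d T s0 xs (u + m) = RFDtotal cf d T s0 xs u + d * m := by
  simp only [RFDtotal, RFDcounts_add_of_isRun h, sum_add_distrib, ← mul_sum]
  rw [sum_count_eq (fun j => xs (u + j))]

theorem RFDprob_add_of_isRun (hd : 1 ≤ d) {u m : ℕ}
    (h : IsRun (RFDrescaleAt cf d T s0 xs) u (u + m + 1)) (x : Fin N) :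
    RFDprob cf d T s0 xs (u + m) x =
      ((RFDcounts cf d T s0 xs u x : ℝ) / d + Nat.count (fun j => xs (u + j) = x) m) /
        ((RFDtotal cf d T s0 xs u : ℝ) / d + m) := by
  have : (0 : ℝ) < d := by exact_mod_cast hd
  rw [RFDprob, RFDcounts_add_of_isRun h, RFDtotal_add_of_isRun h, div_add' _ _ _ this.ne',
    div_add' _ _ _ this.ne', div_div_div_cancel_right₀ this.ne']
  push_cast
  ring

theorem RFD_redundancy_le (hd : 1 ≤ d) (hs0 : ∀ x, 1 ≤ s0 x) {u m : ℕ} (hm : 1 ≤ m)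
    (hrun : IsRun (RFDrescaleAt cf d T s0 xs) u (u + m)) {p : Fin N → ℝ} (hp : ∀ x, 0 ≤ p x)
    (hp1 : ∑ x, p x ≤ 1) (hpos : ∀ k, u ≤ k → k < u + m → 0 < p (xs k)) {v : ℝ} (hv : 0 ≤ v)
    (htot : (RFDtotal cf d T s0 xs u : ℝ) / d ≤ v + 1) :
    ∑ k ∈ Ico u (u + m), (Real.log (p (xs k)) - Real.log (RFDprob cf d T s0 xs k (xs k))) ≤
      #(underweighted (fun x => (RFDcounts cf d T s0 xs u x : ℝ) / d) (fun j => xs (u + j)) m) *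
        (Real.log m + Real.log d) + (Real.log (v + 1) + v * Real.log m) := by
  have hd0 : (0 : ℝ) < d := by exact_mod_cast hd
  have weight_ge : ∀ x, 1 / (d : ℝ) ≤ (RFDcounts cf d T s0 xs u x : ℝ) / d := fun x => by
    gcongr
    exact_mod_cast one_le_RFDcounts hs0 u x
  have total_pos : (0 : ℝ) < (RFDtotal cf d T s0 xs u : ℝ) / d :=
    div_pos (Nat.cast_pos.2 (RFDtotal_pos hs0 u)) hd0
  have smoothing := additive_smoothing_redundancy_le hp hp1 hm
    (fun k hk => hpos (u + k) (by omega) (by omega)) (one_div_pos.2 hd0) weight_ge total_pos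
    hv htot
  rw [Real.log_div one_ne_zero hd0.ne', Real.log_one, zero_sub, sub_neg_eq_add] at smoothing
  rw [sum_Ico_eq_sum_range, Nat.add_sub_cancel_left]
  refine le_of_eq_of_le (sum_congr rfl fun k hk => ?_) smoothing
  have := mem_range.1 hk
  rw [RFDprob_add_of_isRun hd fun i h1 h2 => hrun i h1 (by omega)]

end Dynamics

section Parameters

/-- The standing assumptions on a realization of Algorithm RFD. -/
structure IsRFDRealization {N : ℕ} (cf : ℝ) (d T : ℕ) (s0 : Fin N → ℕ) : Prop where
  one_le_d : 1 ≤ d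
  cf_nonneg : 0 ≤ cf
  cf_lt_one : cf < 1
  d_le : (d : ℝ) ≤ (1 - cf) * ((T : ℝ) - N)
  one_le_s0 : ∀ x, 1 ≤ s0 x
  sum_s0_le : ∑ x, s0 x ≤ T

/-- The paper's `L`: the number of increments by `d` that fit between the least total `N` and the
threshold `T`. -/
noncomputable def RFDcapacity (N d T : ℕ) : ℝ :=
  ((T : ℝ) - N) / d

/-- The part of the capacity `L` that a rescale of full counts frees, which is the paper's
`L - γ`. -/
noncomputable def RFDheadroom (cf : ℝ) (N d T : ℕ) : ℝ :=
  (1 - cf) * RFDcapacity N d T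

/-- The paper's `A`: a bound, in units of `d`, for the total that survives a rescale. -/
noncomputable def RFDresidue (cf : ℝ) (N d T : ℕ) : ℝ :=
  (N : ℝ) / d + cf * RFDcapacity N d T

/-- `r(L + 1)` in nats: bounds the redundancy of a run that starts at a rescale. -/
noncomputable def rescaleCost (cf : ℝ) (N d T : ℕ) : ℝ :=
  (N + RFDresidue cf N d T) * Real.log (RFDcapacity N d T + 1) +
    (Real.log (RFDresidue cf N d T + 1) + (RFDresidue cf N d T + 1)) + N * Real.log d

/-- The bracket of the theorem in nats: bounds the redundancy of the first run of a stationary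
segment, which may start from arbitrary counts. -/
noncomputable def segmentCost (cf : ℝ) (N d T : ℕ) : ℝ :=
  RFDheadroom cf N d T * (1 + Real.log (RFDcapacity N d T + 1)) +
    Real.log (RFDheadroom cf N d T) + rescaleCost cf N d T

theorem RFDheadroom_add_RFDresidue (cf : ℝ) (N d T : ℕ) :
    RFDheadroom cf N d T + RFDresidue cf N d T = (T : ℝ) / d := by
  rw [RFDheadroom, RFDresidue, RFDcapacity]
  ring

theorem log_add_one_add_mul_log_le {A m z : ℝ} (hA : 0 ≤ A) (hm : 1 ≤ m) (hmz : m ≤ z) :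
    Real.log (A + 1) + A * Real.log m ≤
      (A * Real.log z + (Real.log (A + 1) + (A + 1))) * (m / (m + 1)) := by
  have log_A_le : Real.log (A + 1) ≤ A := by
    linarith [Real.log_le_sub_one_of_pos (by linarith : 0 < A + 1)]
  have log_m_le : Real.log m ≤ m - 1 := Real.log_le_sub_one_of_pos (by positivity)
  have log_m_le_log_z : Real.log m ≤ Real.log z := Real.log_le_log (by positivity) hmz
  rw [mul_div_assoc', le_div_iff₀ (by positivity)]
  nlinarith [mul_le_mul_of_nonneg_left log_m_le_log_z (by positivity : 0 ≤ A * m),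
    mul_le_mul_of_nonneg_left log_m_le hA]

end Parameters

namespace IsRFDRealization

variable {N d T : ℕ} {cf : ℝ} {s0 : Fin N → ℕ} {xs : ℕ → Fin N}

theorem d_pos (h : IsRFDRealization cf d T s0) : (0 : ℝ) < d :=
  Nat.cast_pos.2 h.one_le_d

theorem capacity_mul (h : IsRFDRealization cf d T s0) : RFDcapacity N d T * d = (T : ℝ) - N :=
  div_mul_cancel₀ _ h.d_pos.ne'

theorem one_le_headroom (h : IsRFDRealization cf d T s0) : 1 ≤ RFDheadroom cf N d T := by
  rw [RFDheadroom, RFDcapacity, mul_div_assoc', one_le_div h.d_pos]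
  exact h.d_le

theorem headroom_pos (h : IsRFDRealization cf d T s0) : 0 < RFDheadroom cf N d T :=
  one_pos.trans_le h.one_le_headroom

theorem capacity_pos (h : IsRFDRealization cf d T s0) : 0 < RFDcapacity N d T :=
  pos_of_mul_pos_right h.headroom_pos (sub_nonneg.2 h.cf_lt_one.le)

theorem residue_nonneg (h : IsRFDRealization cf d T s0) : 0 ≤ RFDresidue cf N d T :=
  add_nonneg (by positivity) (mul_nonneg h.cf_nonneg h.capacity_pos.le)

theorem rescaleCost_nonneg (h : IsRFDRealization cf d T s0) : 0 ≤ rescaleCost cf N d T := by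
  have := h.residue_nonneg
  have := Real.log_nonneg (by linarith [h.capacity_pos] : 1 ≤ RFDcapacity N d T + 1)
  have := Real.log_nonneg (by linarith : 1 ≤ RFDresidue cf N d T + 1)
  have := Real.log_nonneg (Nat.one_le_cast.2 h.one_le_d : (1 : ℝ) ≤ d)
  unfold rescaleCost
  positivity

theorem rBound_mul_log_two (h : IsRFDRealization cf d T s0) :
    rBound N d (RFDresidue cf N d T) (RFDcapacity N d T + 1) * Real.log 2 =
      rescaleCost cf N d T := by
  have : Real.log 2 ≠ 0 := (Real.log_pos one_lt_two).ne'
  have : RFDresidue cf N d T + 1 ≠ 0 := by linarith [h.residue_nonneg]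
  simp only [rBound, rescaleCost, Real.logb, Real.log_mul this (Real.exp_pos _).ne', Real.log_exp]
  field_simp

theorem bracket_mul_log_two (h : IsRFDRealization cf d T s0) :
    (RFDheadroom cf N d T * Real.logb 2 (Real.exp 1 * (RFDcapacity N d T + 1)) +
        Real.logb 2 (RFDheadroom cf N d T) +
        rBound N d (RFDresidue cf N d T) (RFDcapacity N d T + 1)) * Real.log 2 =
      segmentCost cf N d T := by
  have : Real.log 2 ≠ 0 := (Real.log_pos one_lt_two).ne'
  have : RFDcapacity N d T + 1 ≠ 0 := by linarith [h.capacity_pos]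
  rw [add_mul _ (rBound _ _ _ _), h.rBound_mul_log_two, segmentCost, Real.logb, Real.logb,
    Real.log_mul (Real.exp_pos 1).ne' this, Real.log_exp]
  field_simp

theorem total_le (h : IsRFDRealization cf d T s0) (k : ℕ) : RFDtotal cf d T s0 xs k ≤ T := by
  induction k with
  | zero => exact h.sum_s0_le
  | succ k ih =>
    by_cases hk : RFDrescaleAt cf d T s0 xs (k + 1)
    · have step := RFDtotal_succ_of_rescale_le h.cf_nonneg h.cf_lt_one.le h.one_le_s0 hk
      have : cf * ((RFDtotal cf d T s0 xs k : ℝ) - N) ≤ cf * ((T : ℝ) - N) := by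
        have := h.cf_nonneg
        gcongr
      have := h.d_le
      exact_mod_cast (by linarith : (RFDtotal cf d T s0 xs (k + 1) : ℝ) ≤ T)
    · rw [RFDtotal_succ_of_not_rescale hk]
      exact not_lt.1 (RFDrescaleAt_succ.not.1 hk)

theorem total_div_le (h : IsRFDRealization cf d T s0) (k : ℕ) :
    (RFDtotal cf d T s0 xs k : ℝ) / d ≤ RFDheadroom cf N d T + RFDresidue cf N d T := by
  rw [RFDheadroom_add_RFDresidue]
  gcongr
  exact h.total_le k

theorem total_div_le_of_rescale (h : IsRFDRealization cf d T s0) {g : ℕ}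
    (hg : RFDrescaleAt cf d T s0 xs g) :
    (RFDtotal cf d T s0 xs g : ℝ) / d ≤ RFDresidue cf N d T + 1 := by
  obtain ⟨k, rfl⟩ := Nat.exists_eq_add_of_le' hg.1
  have bound : (RFDresidue cf N d T + 1) * d = N + cf * ((T : ℝ) - N) + d := by
    rw [RFDresidue, ← h.capacity_mul]
    field_simp [h.d_pos.ne']
  rw [div_le_iff₀ h.d_pos, bound]
  refine (RFDtotal_succ_of_rescale_le h.cf_nonneg h.cf_lt_one.le h.one_le_s0 hg).trans ?_
  have := h.cf_nonneg
  gcongr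
  exact h.total_le k

theorem run_length_le (h : IsRFDRealization cf d T s0) {u m : ℕ}
    (hrun : IsRun (RFDrescaleAt cf d T s0 xs) u (u + m)) : (m : ℝ) ≤ RFDcapacity N d T + 1 := by
  obtain _ | m := m
  · exact Nat.cast_zero.trans_le (by linarith [h.capacity_pos])
  have total_eq := RFDtotal_add_of_isRun hrun
  have upper := h.total_le (xs := xs) (u + m)
  have lower := card_le_RFDtotal (cf := cf) (d := d) (T := T) (xs := xs) h.one_le_s0 u
  have : (N : ℝ) + d * m ≤ T := by exact_mod_cast (by omega : N + d * m ≤ T)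
  have : (m : ℝ) ≤ RFDcapacity N d T := (le_div_iff₀ h.d_pos).2 (by linarith)
  push_cast
  linarith

theorem headroom_lt_of_isRun (h : IsRFDRealization cf d T s0) {g m : ℕ} (hm : 0 < m)
    (hg : RFDrescaleAt cf d T s0 xs g) (hgm : RFDrescaleAt cf d T s0 xs (g + m))
    (hrun : IsRun (RFDrescaleAt cf d T s0 xs) g (g + m)) : RFDheadroom cf N d T < m + 1 := by
  obtain ⟨m, rfl⟩ := Nat.exists_eq_add_of_le' hm
  have overflow : (T : ℝ) < RFDtotal cf d T s0 xs g + d * m + d := by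
    exact_mod_cast RFDtotal_add_of_isRun hrun ▸ RFDrescaleAt_succ.1 hgm
  have start := (div_le_iff₀ h.d_pos).1 (h.total_div_le_of_rescale hg)
  have full : (RFDheadroom cf N d T + RFDresidue cf N d T) * d = T := by
    rw [RFDheadroom_add_RFDresidue, div_mul_cancel₀ _ h.d_pos.ne']
  refine lt_of_mul_lt_mul_right ?_ h.d_pos.le
  push_cast
  linarith

theorem rescaleCost_mul_le (h : IsRFDRealization cf d T s0) {g m : ℕ} (hm : 0 < m)
    (hg : RFDrescaleAt cf d T s0 xs g) (hgm : RFDrescaleAt cf d T s0 xs (g + m))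
    (hrun : IsRun (RFDrescaleAt cf d T s0 xs) g (g + m)) :
    rescaleCost cf N d T * (m / (m + 1)) ≤
      rescaleCost cf N d T / RFDheadroom cf N d T * m := by
  have := h.rescaleCost_nonneg
  have := h.headroom_pos
  rw [div_mul_eq_mul_div, mul_div_assoc]
  gcongr
  exact (h.headroom_lt_of_isRun hm hg hgm hrun).le

theorem first_run_redundancy_le (h : IsRFDRealization cf d T s0) {u m : ℕ} (hm : 1 ≤ m)
    (hrun : IsRun (RFDrescaleAt cf d T s0 xs) u (u + m)) {p : Fin N → ℝ} (hp : ∀ x, 0 ≤ p x)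
    (hp1 : ∑ x, p x ≤ 1) (hpos : ∀ k, u ≤ k → k < u + m → 0 < p (xs k)) :
    ∑ k ∈ Ico u (u + m), (Real.log (p (xs k)) - Real.log (RFDprob cf d T s0 xs k (xs k))) ≤
      segmentCost cf N d T := by
  set U := underweighted (fun x => (RFDcounts cf d T s0 xs u x : ℝ) / d) (fun j => xs (u + j)) m
  set A := RFDresidue cf N d T
  set B := RFDheadroom cf N d T
  have hA : 0 ≤ A := h.residue_nonneg
  have hB : 1 ≤ B := h.one_le_headroom
  have cardU : (#U : ℝ) ≤ N := by exact_mod_cast (card_le_univ U).trans_eq (Fintype.card_fin N)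
  have log_m_le : Real.log m ≤ Real.log (RFDcapacity N d T + 1) :=
    Real.log_le_log (by exact_mod_cast hm) (h.run_length_le hrun)
  have : 0 ≤ Real.log m := Real.log_nonneg (by exact_mod_cast hm)
  have : 0 ≤ Real.log d := Real.log_nonneg (by exact_mod_cast h.one_le_d)
  have log_total_le : Real.log (B + A + 1) ≤ B + A := by
    linarith [Real.log_le_sub_one_of_pos (by linarith : 0 < B + A + 1)]
  have log_B_nonneg : 0 ≤ Real.log B := Real.log_nonneg hB
  have log_A_nonneg : 0 ≤ Real.log (A + 1) := Real.log_nonneg (by linarith)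
  calc ∑ k ∈ Ico u (u + m), (Real.log (p (xs k)) - Real.log (RFDprob cf d T s0 xs k (xs k)))
      ≤ #U * (Real.log m + Real.log d) + (Real.log (B + A + 1) + (B + A) * Real.log m) :=
        RFD_redundancy_le h.one_le_d h.one_le_s0 hm hrun hp hp1 hpos (by linarith)
          ((h.total_div_le u).trans (by linarith))
    _ ≤ N * (Real.log (RFDcapacity N d T + 1) + Real.log d) +
          ((B + A) + (B + A) * Real.log (RFDcapacity N d T + 1)) := by gcongr
    _ ≤ segmentCost cf N d T := by
        rw [segmentCost, rescaleCost]
        linarith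

theorem fresh_run_redundancy_le (h : IsRFDRealization cf d T s0) {g m : ℕ} (hm : 1 ≤ m)
    (hg : RFDrescaleAt cf d T s0 xs g)
    (hrun : IsRun (RFDrescaleAt cf d T s0 xs) g (g + m)) {p : Fin N → ℝ} (hp : ∀ x, 0 ≤ p x)
    (hp1 : ∑ x, p x ≤ 1) (hpos : ∀ k, g ≤ k → k < g + m → 0 < p (xs k)) :
    ∑ k ∈ Ico g (g + m), (Real.log (p (xs k)) - Real.log (RFDprob cf d T s0 xs k (xs k))) ≤
      rescaleCost cf N d T * (m / (m + 1)) := by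
  set U := underweighted (fun x => (RFDcounts cf d T s0 xs g x : ℝ) / d) (fun j => xs (g + j)) m
  set A := RFDresidue cf N d T with hA_def
  have hA : 0 ≤ A := h.residue_nonneg
  have hm' : (1 : ℝ) ≤ m := by exact_mod_cast hm
  have cardU : (#U : ℝ) ≤ N * (m / (m + 1)) := by
    obtain ⟨x, hx⟩ := exists_le_RFDcounts_of_rescale hg
    have weight_ge : 1 ≤ (RFDcounts cf d T s0 xs g x : ℝ) / d :=
      (one_le_div h.d_pos).2 (by exact_mod_cast hx)
    have := card_underweighted_mul_le (σ := fun x => (RFDcounts cf d T s0 xs g x : ℝ) / d)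
      weight_ge (fun j => xs (g + j)) m
    rw [Fintype.card_fin] at this
    rw [mul_div_assoc', le_div_iff₀ (by positivity), mul_comm (N : ℝ)]
    exact_mod_cast this
  have log_m_le : Real.log m ≤ Real.log (RFDcapacity N d T + 1) :=
    Real.log_le_log (by positivity) (h.run_length_le hrun)
  have : 0 ≤ Real.log m := Real.log_nonneg hm'
  have : 0 ≤ Real.log d := Real.log_nonneg (by exact_mod_cast h.one_le_d)
  have normalizer_le := log_add_one_add_mul_log_le hA hm' (h.run_length_le hrun)
  calc ∑ k ∈ Ico g (g + m), (Real.log (p (xs k)) - Real.log (RFDprob cf d T s0 xs k (xs k)))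
      ≤ #U * (Real.log m + Real.log d) + (Real.log (A + 1) + A * Real.log m) :=
        RFD_redundancy_le h.one_le_d h.one_le_s0 hm hrun hp hp1 hpos hA
          (h.total_div_le_of_rescale hg)
    _ ≤ N * (m / (m + 1)) * (Real.log (RFDcapacity N d T + 1) + Real.log d) +
          (A * Real.log (RFDcapacity N d T + 1) + (Real.log (A + 1) + (A + 1))) *
            (m / (m + 1)) := by gcongr
    _ = rescaleCost cf N d T * (m / (m + 1)) := by
        rw [rescaleCost, ← hA_def]
        ring

theorem segment_redundancy_le (h : IsRFDRealization cf d T s0)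
    [DecidablePred (RFDrescaleAt cf d T s0 xs)] {p : Fin N → ℝ} (hp : ∀ x, 0 ≤ p x)
    (hp1 : ∑ x, p x ≤ 1) {a b : ℕ} (ha : 1 ≤ a) (hab : a ≤ b)
    (hpos : ∀ k ∈ Icc a b, 0 < p (xs (k - 1))) :
    ∑ k ∈ Icc a b, -Real.log (RFDprob cf d T s0 xs (k - 1) (xs (k - 1))) ≤
      ∑ k ∈ Icc a b, -Real.log (p (xs (k - 1))) + segmentCost cf N d T +
        ∑ k ∈ Icc a b,
          renewalCharge (RFDrescaleAt cf d T s0 xs) (rescaleCost cf N d T) (k - 1) := by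
  have pos : ∀ k, a - 1 ≤ k → k < b → 0 < p (xs k) := fun k h1 h2 =>
    hpos (k + 1) (mem_Icc.2 ⟨by omega, h2⟩)
  have charged := sum_Ico_le_add_sum_renewalCharge h.rescaleCost_nonneg
    (fun k => Real.log (p (xs k)) - Real.log (RFDprob cf d T s0 xs k (xs k)))
    (by omega : a - 1 < b)
    (fun v h1 h2 hrun => by
      obtain ⟨m, rfl⟩ := Nat.exists_eq_add_of_le h1.le
      exact h.first_run_redundancy_le (by omega) hrun hp hp1 fun k h3 h4 =>
        pos k h3 (by omega))
    (fun g m h1 hm h2 hg hrun =>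
      h.fresh_run_redundancy_le hm hg hrun hp hp1 fun k h3 h4 => pos k (by omega) (by omega))
  rw [sum_Icc_sub_one (fun k => -Real.log (RFDprob cf d T s0 xs k (xs k))) ha,
    sum_Icc_sub_one (fun k => -Real.log (p (xs k))) ha, sum_Icc_sub_one _ ha]
  simp only [sum_sub_distrib, sum_neg_distrib] at charged ⊢
  linarith

end IsRFDRealization

section CodeLength

variable {N d T n : ℕ} {cf ε : ℝ} {s0 : Fin N → ℕ} {xs : ℕ → Fin N} {S : List (ℕ × ℕ)}
  {pI : ℕ × ℕ → Fin N → ℝ}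

theorem RFDcodeLen_mul_log_two (a b : ℕ) :
    RFDcodeLen cf d T s0 xs a b * Real.log 2 =
      ∑ k ∈ Icc a b, -Real.log (RFDprob cf d T s0 xs (k - 1) (xs (k - 1))) := by
  have : Real.log 2 ≠ 0 := (Real.log_pos one_lt_two).ne'
  simp only [RFDcodeLen, Real.logb, ← sum_div, sum_neg_distrib]
  field_simp

theorem pwsCodeLen_mul_log_two :
    pwsCodeLen S pI xs * Real.log 2 =
      (S.map fun q => ∑ k ∈ Icc q.1 q.2, -Real.log (pI q (xs (k - 1)))).sum := by
  have : Real.log 2 ≠ 0 := (Real.log_pos one_lt_two).ne'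
  rw [pwsCodeLen, ← List.sum_map_mul_right]
  simp only [Real.logb, ← sum_div, sum_neg_distrib]
  field_simp

theorem mul_le_pwsCodeLen_mul_log_two (hS : ConsecPartition 1 n S)
    (hpos : ∀ q ∈ S, ∀ k ∈ Icc q.1 q.2, 0 < pI q (xs (k - 1)))
    (hmax : ∀ q ∈ S, ∀ x, pI q x ≤ 1 - ε) : ε * n ≤ pwsCodeLen S pI xs * Real.log 2 :=
  calc ε * n = ∑ _k ∈ Icc 1 n, ε := by simp [mul_comm]
    _ = (S.map fun q => ∑ _k ∈ Icc q.1 q.2, ε).sum := hS.sum_Icc_eq _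
    _ ≤ (S.map fun q => ∑ k ∈ Icc q.1 q.2, -Real.log (pI q (xs (k - 1)))).sum := by
      refine List.sum_le_sum fun q hq => sum_le_sum fun k hk => ?_
      linarith [Real.log_le_sub_one_of_pos (hpos q hq k hk), hmax q hq (xs (k - 1))]
    _ = pwsCodeLen S pI xs * Real.log 2 := pwsCodeLen_mul_log_two.symm

theorem IsRFDRealization.RFDcodeLen_mul_log_two_le (h : IsRFDRealization cf d T s0)
    (hS : ConsecPartition 1 n S) (hp : ∀ q ∈ S, ∀ x, 0 ≤ pI q x)
    (hp1 : ∀ q ∈ S, ∑ x, pI q x ≤ 1)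
    (hpos : ∀ q ∈ S, ∀ k ∈ Icc q.1 q.2, 0 < pI q (xs (k - 1))) :
    RFDcodeLen cf d T s0 xs 1 n * Real.log 2 ≤
      pwsCodeLen S pI xs * Real.log 2 + S.length * segmentCost cf N d T +
        (rescaleCost cf N d T / RFDheadroom cf N d T * n + rescaleCost cf N d T) := by
  classical
  set P := RFDrescaleAt cf d T s0 xs
  set R := rescaleCost cf N d T
  have charges : ∑ k ∈ Icc 1 n, renewalCharge P R (k - 1) ≤ R / RFDheadroom cf N d T * n + R :=
    (sum_Icc_sub_one _ le_rfl n).trans_le <|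
      sum_renewalCharge_le (div_nonneg h.rescaleCost_nonneg h.headroom_pos.le)
        h.rescaleCost_nonneg (fun _ _ => h.rescaleCost_mul_le) n
  calc RFDcodeLen cf d T s0 xs 1 n * Real.log 2
      = (S.map fun q => ∑ k ∈ Icc q.1 q.2,
          -Real.log (RFDprob cf d T s0 xs (k - 1) (xs (k - 1)))).sum := by
        rw [RFDcodeLen_mul_log_two, hS.sum_Icc_eq]
    _ ≤ (S.map fun q => ∑ k ∈ Icc q.1 q.2, -Real.log (pI q (xs (k - 1))) +
          segmentCost cf N d T + ∑ k ∈ Icc q.1 q.2, renewalCharge P R (k - 1)).sum :=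
        List.sum_le_sum fun q hq => h.segment_redundancy_le (hp q hq) (hp1 q hq)
          (hS.le_fst_of_mem hq) (hS.fst_le_snd_of_mem hq) (hpos q hq)
    _ = pwsCodeLen S pI xs * Real.log 2 + S.length * segmentCost cf N d T +
          ∑ k ∈ Icc 1 n, renewalCharge P R (k - 1) := by
        rw [hS.sum_Icc_eq, pwsCodeLen_mul_log_two]
        simp only [List.sum_map_add, List.map_const', List.sum_replicate, nsmul_eq_mul]
    _ ≤ _ := by gcongr

end CodeLength

theorem stmt15_general (N d T : ℕ) (cf : ℝ) (s0 : Fin N → ℕ) (xs : ℕ → Fin N)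
    (h : IsRFDRealization cf d T s0) (n : ℕ)
    (L : ℝ) (hL : L = ((T : ℝ) - N) / d)
    (A : ℝ) (hA : A = (N : ℝ) / d + cf * L)
    (γ : ℝ) (hγ : cf = γ / L)
    (ε : ℝ) (hε : 0 < ε)
    (S : List (ℕ × ℕ)) (hS : ConsecPartition 1 n S)
    (pI : ℕ × ℕ → Fin N → ℝ)
    (hpI : ∀ q ∈ S, (∀ x, 0 ≤ pI q x) ∧ ∑ x, pI q x ≤ 1)
    (hmax : ∀ q ∈ S, ∀ x, pI q x ≤ 1 - ε)
    (δ : ℝ) (hδ : δ = rBound N d A (L + 1) / (ε * (L - γ) * Real.logb 2 (Real.exp 1))) :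
    (∃ q ∈ S, ∃ k ∈ Icc q.1 q.2, pI q (xs (k - 1)) = 0) ∨
      RFDcodeLen cf d T s0 xs 1 n - (1 + δ) * pwsCodeLen S pI xs ≤
        (S.length : ℝ) * ((L - γ) * Real.logb 2 (Real.exp 1 * (L + 1))
            + Real.logb 2 (L - γ) + rBound N d A (L + 1))
        + rBound N d A (L + 1) := by
  refine or_iff_not_imp_left.2 fun hzero => ?_
  push Not at hzero
  obtain rfl : L = RFDcapacity N d T := hL
  obtain rfl : A = RFDresidue cf N d T := hA
  have headroom_eq : RFDcapacity N d T - γ = RFDheadroom cf N d T := by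
    rw [RFDheadroom, one_sub_mul, hγ, div_mul_cancel₀ _ h.capacity_pos.ne']
  rw [headroom_eq] at hδ ⊢
  have log_two_pos : 0 < Real.log 2 := Real.log_pos one_lt_two
  have δ_eq : δ = rescaleCost cf N d T / RFDheadroom cf N d T / ε := by
    rw [hδ, ← h.rBound_mul_log_two, Real.logb, Real.log_exp]
    field_simp
  have hpos : ∀ q ∈ S, ∀ k ∈ Icc q.1 q.2, 0 < pI q (xs (k - 1)) := fun q hq k hk =>
    ((hpI q hq).1 _).lt_of_ne' (hzero q hq k hk)
  have pws_ge := mul_le_pwsCodeLen_mul_log_two hS hpos hmax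
  have rfd_le := h.RFDcodeLen_mul_log_two_le hS (fun q hq => (hpI q hq).1)
    (fun q hq => (hpI q hq).2) hpos
  have charge_le : rescaleCost cf N d T / RFDheadroom cf N d T * n ≤
      δ * (pwsCodeLen S pI xs * Real.log 2) := by
    have := h.rescaleCost_nonneg
    have := h.headroom_pos
    calc rescaleCost cf N d T / RFDheadroom cf N d T * n = δ * (ε * n) := by
          rw [δ_eq]
          field_simp
      _ ≤ δ * (pwsCodeLen S pI xs * Real.log 2) := by
          rw [δ_eq]
          gcongr
  refine le_of_mul_le_mul_right ?_ log_two_pos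
  rw [add_mul (S.length * _ : ℝ), mul_assoc (S.length : ℝ), h.bracket_mul_log_two,
    h.rBound_mul_log_two]
  linarith

/-- Theorem 2: with `A = N/d + c·L`, `L = (T-N)/d` and `r` as above,
let `0 < ε < 1` and let `PWS = (S, (p_I))` be a piecewise stationary model with
`p_I(x) ≤ 1 - ε` for every `I ∈ S` and every `x`. For any realization of Algorithm RFD
with `c = γ/L` for an integer `γ ≥ 0`, setting `δ = r(L+1)/(ε·(L-γ)·log₂ e)`:
`ℓ(x^n; RFD) - (1+δ)·ℓ(x^n; PWS)
  ≤ |S|·[(L-γ)·log₂(e·(L+1)) + log₂(L-γ) + r(L+1)] + r(L+1)`.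
If `PWS` assigns probability `0` somewhere, its code length is `+∞` and the claim is
trivial (first disjunct). -/
theorem stmt15 (N d T : ℕ) (cf : ℝ) (hN : 1 < N)
    (s0 : Fin N → ℕ) (xs : ℕ → Fin N)
    (hd : 1 ≤ d) (hc0 : 0 ≤ cf) (hc1 : cf < 1)
    (hT : (d : ℝ) ≤ (1 - cf) * ((T : ℝ) - N))
    (hs0 : ∀ x, 1 ≤ s0 x) (hsum : ∑ x, s0 x ≤ T)
    (n : ℕ) (hn : 1 ≤ n)
    (L : ℝ) (hL : L = ((T : ℝ) - N) / d)
    (A : ℝ) (hA : A = (N : ℝ) / d + cf * L)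
    (γ : ℕ) (hγ : cf = (γ : ℝ) / L)
    (ε : ℝ) (hε0 : 0 < ε) (hε1 : ε < 1)
    (S : List (ℕ × ℕ)) (hS : ConsecPartition 1 n S)
    (pI : ℕ × ℕ → Fin N → ℝ)
    (hpI : ∀ q ∈ S, (∀ x, 0 ≤ pI q x) ∧ ∑ x, pI q x = 1)
    (hmax : ∀ q ∈ S, ∀ x, pI q x ≤ 1 - ε)
    (δ : ℝ) (hδ : δ = rBound N d A (L + 1) / (ε * (L - γ) * Real.logb 2 (Real.exp 1))) :
    (∃ q ∈ S, ∃ k ∈ Finset.Icc q.1 q.2, pI q (xs (k - 1)) = 0) ∨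
      RFDcodeLen cf d T s0 xs 1 n - (1 + δ) * pwsCodeLen S pI xs ≤
        (S.length : ℝ) * ((L - (γ : ℝ)) * Real.logb 2 (Real.exp 1 * (L + 1))
            + Real.logb 2 (L - (γ : ℝ)) + rBound N d A (L + 1))
        + rBound N d A (L + 1) :=
  stmt15_general N d T cf s0 xs ⟨hd, hc0, hc1, hT, hs0, hsum⟩ n L hL A hA γ hγ ε hε0 S hS pI
    (fun q hq => (hpI q hq).imp_right le_of_eq) hmax δ hδ
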